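/- Let E be a Hilbert space, T>0, p∈[1,∞), β∈(0,1/2) and α∈(0,1) with α<β+1/2. Let g:(0,T)→E be strongly measurable with N_β g(t)<∞ for every t∈(0,T] and ∫_0^T (N_β g(t))^p dt < ∞, and let b:(0,T)→ℝ be measurable and bounded. Then for every t∈(0,T] the function g·b is Bochner integrable on (0,t), the function H(t):=∫_0^t g(r) b(r) dr satisfies ‖H(t)−H(s)‖ ≤ (2β+1)^{−1/2} ‖b‖_∞ N_β g(t) (t−s)^{β+1/2} for all 0≤s≤t≤T, and its fractional Sobolev seminorm satisfies [H]_{W^{α,p}(0,T;E)}^p ≤ C ‖b‖_∞^p ∫_0^T (N_β g(t))^p dt for a constant C depending only on α, β, p and T. -/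

import Mathlib

open MeasureTheory Set ENNReal NNReal

/-!
The increment `H t - H s` is the integral of `b • g` over `(s, t)`. Writing
`‖g r‖ = (t - r) ^ β * ((t - r) ^ (-β) * ‖g r‖)` and applying the Cauchy-Schwarz inequality bounds
its norm by `B` times `((t - s) ^ (2 * β + 1) / (2 * β + 1)) ^ (1 / 2) * N t`
(`lintegral_enorm_le_weighted`); this gives both the integrability and the Hölder-type estimate.

For the seminorm, the Hölder estimate bounds the integrand on `{s < t}` by a constant times
`N t ^ p * (t - s) ^ (γ * p - 1)`, where `γ = β + 1 / 2 - α > 0`, and the integrand is symmetric in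
`s` and `t`. Since `γ * p - 1 > -1` the kernel is integrable, with integral at most
`T ^ (γ * p) / (γ * p)`, and Tonelli's theorem handles the half `{t < s}`. Tonelli requires `N`
to be measurable on `(0, T)`, which is `aemeasurable_weighted`.
-/

lemma lintegral_sub_rpow {s t a : ℝ} (hst : s ≤ t) (ha : -1 < a) :
    ∫⁻ r in Ioo s t, ENNReal.ofReal ((t - r) ^ a)
      = ENNReal.ofReal ((t - s) ^ (a + 1) / (a + 1)) := by
  have hInt : IntervalIntegrable (fun r => (t - r) ^ a) volume s t := by
    have h := (intervalIntegral.intervalIntegrable_rpow' (a := t - s) (b := 0) ha).comp_sub_left t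
    simpa using h
  rw [intervalIntegrable_iff_integrableOn_Ioo_of_le hst] at hInt
  rw [← ofReal_integral_eq_lintegral_ofReal hInt]
  · congr 1
    rw [← integral_Ioc_eq_integral_Ioo, ← intervalIntegral.integral_of_le hst,
      intervalIntegral.integral_comp_sub_left (fun x => x ^ a) t, integral_rpow (Or.inl ha)]
    rw [sub_self, Real.zero_rpow (by linarith), sub_zero]
  · filter_upwards [ae_restrict_mem measurableSet_Ioo] with r hr
    exact Real.rpow_nonneg (by linarith [hr.2]) _

/-- Cauchy-Schwarz against the weight `(t - r) ^ β`. -/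
lemma lintegral_enorm_le_weighted {E : Type*} [NormedAddCommGroup E] {T β s t : ℝ} (hβ : 0 < β)
    {g : ℝ → E} (hg : AEStronglyMeasurable g (volume.restrict (Ioo 0 T)))
    (hs : 0 ≤ s) (hst : s ≤ t) (htT : t ≤ T) :
    ∫⁻ r in Ioo s t, ‖g r‖ₑ ≤
      ENNReal.ofReal ((2 * β + 1) ^ (-(1:ℝ)/2) * (t - s) ^ (β + 1/2)) *
        (∫⁻ r in Ioo (0:ℝ) t,
          ENNReal.ofReal ((t - r) ^ (-(2 * β))) * (‖g r‖₊ : ℝ≥0∞) ^ 2) ^ ((1:ℝ)/2) := by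
  have hsub : Ioo s t ⊆ Ioo 0 T := Ioo_subset_Ioo hs htT
  have hgm : AEMeasurable (fun r => ‖g r‖ₑ) (volume.restrict (Ioo s t)) :=
    (hg.mono_measure (Measure.restrict_mono hsub le_rfl)).enorm
  have hw : ∀ a : ℝ, AEMeasurable (fun r : ℝ => ENNReal.ofReal ((t - r) ^ a))
      (volume.restrict (Ioo s t)) := fun a => by
    have : Measurable (fun r : ℝ => ENNReal.ofReal ((t - r) ^ a)) := by fun_prop
    exact this.aemeasurable
  have hts : 0 ≤ t - s := by linarith
  calc ∫⁻ r in Ioo s t, ‖g r‖ₑ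
      = ∫⁻ r in Ioo s t, ((fun r => ENNReal.ofReal ((t - r) ^ β)) *
          (fun r => ENNReal.ofReal ((t - r) ^ (-β)) * ‖g r‖ₑ)) r := by
        refine setLIntegral_congr_fun measurableSet_Ioo fun r hr => ?_
        have hpos : 0 < t - r := by linarith [hr.2]
        simp only [Pi.mul_apply]
        rw [← mul_assoc, ← ENNReal.ofReal_mul (by positivity), ← Real.rpow_add hpos]
        simp
    _ ≤ (∫⁻ r in Ioo s t, ENNReal.ofReal ((t - r) ^ β) ^ (2:ℝ)) ^ (1 / (2:ℝ)) *
        (∫⁻ r in Ioo s t, (ENNReal.ofReal ((t - r) ^ (-β)) * ‖g r‖ₑ) ^ (2:ℝ)) ^ (1 / (2:ℝ)) :=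
        ENNReal.lintegral_mul_le_Lp_mul_Lq _ Real.HolderConjugate.two_two (hw β)
          ((hw (-β)).mul hgm)
    _ ≤ _ := by
        refine mul_le_mul' (le_of_eq ?_) ?_
        · have h1 : ∫⁻ r in Ioo s t, ENNReal.ofReal ((t - r) ^ β) ^ (2:ℝ)
              = ∫⁻ r in Ioo s t, ENNReal.ofReal ((t - r) ^ (2 * β)) := by
            refine setLIntegral_congr_fun measurableSet_Ioo fun r hr => ?_
            have hpos : 0 < t - r := by linarith [hr.2]
            rw [ENNReal.ofReal_rpow_of_nonneg (by positivity) (by norm_num),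
              ← Real.rpow_mul hpos.le, mul_comm]
          rw [h1, lintegral_sub_rpow hst (by linarith),
            ENNReal.ofReal_rpow_of_nonneg (by positivity) (by norm_num)]
          congr 1
          rw [Real.div_rpow (by positivity) (by positivity), ← Real.rpow_mul hts, neg_div,
            Real.rpow_neg (by positivity), div_eq_mul_inv, mul_comm]
          congr 2
          ring
        · refine ENNReal.rpow_le_rpow ?_ (by norm_num)
          refine le_trans (le_of_eq ?_) (lintegral_mono_set (Ioo_subset_Ioo_left hs))
          refine setLIntegral_congr_fun measurableSet_Ioo fun r hr => ?_
          have hpos : 0 < t - r := by linarith [hr.2]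
          rw [ENNReal.mul_rpow_of_nonneg _ _ (by norm_num),
            ENNReal.ofReal_rpow_of_nonneg (by positivity) (by norm_num), ← Real.rpow_mul hpos.le,
            ENNReal.rpow_two]
          congr 3
          ring

lemma aemeasurable_weighted {E : Type*} [NormedAddCommGroup E] {T β : ℝ}
    {g : ℝ → E} (hg : AEStronglyMeasurable g (volume.restrict (Ioo 0 T))) :
    AEMeasurable (fun t => (∫⁻ r in Ioo (0:ℝ) t,
          ENNReal.ofReal ((t - r) ^ (-(2 * β))) * (‖g r‖₊ : ℝ≥0∞) ^ 2) ^ ((1:ℝ)/2))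
      (volume.restrict (Ioo 0 T)) := by
  have hm : Measurable (fun r => ‖hg.mk g r‖ₑ) := hg.stronglyMeasurable_mk.enorm
  have hM : Measurable (fun t : ℝ => (∫⁻ r, (({x : ℝ × ℝ | 0 < x.2 ∧ x.2 < x.1}).indicator
      (fun x => ENNReal.ofReal ((x.1 - x.2) ^ (-(2 * β))) * ‖hg.mk g x.2‖ₑ ^ 2)) (t, r))
        ^ ((1:ℝ)/2)) := by
    refine Measurable.pow_const (Measurable.lintegral_prod_right' ?_) _
    refine Measurable.indicator (by fun_prop) ?_
    exact (measurableSet_lt measurable_const measurable_snd).inter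
      (measurableSet_lt measurable_snd measurable_fst)
  refine ⟨_, hM, ?_⟩
  filter_upwards [ae_restrict_mem measurableSet_Ioo] with t ht
  congr 1
  have hae : ∀ᵐ r ∂volume.restrict (Ioo 0 t), g r = hg.mk g r :=
    ae_restrict_of_ae_restrict_of_subset (Ioo_subset_Ioo_right ht.2.le) hg.ae_eq_mk
  trans ∫⁻ r in Ioo 0 t, ENNReal.ofReal ((t - r) ^ (-(2 * β))) * ‖hg.mk g r‖ₑ ^ 2
  · refine lintegral_congr_ae ?_
    filter_upwards [hae] with r hr
    rw [hr]; rfl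
  · rw [← lintegral_indicator measurableSet_Ioo]
    rfl

/-- The singular kernel `(t - s) ^ (q - 1)` on `{s < t}` is integrable in `s` when `q > 0`, so
integrating it against a weight in `t` costs a factor `T ^ q / q`. -/
lemma lintegral_kernel_le {T q : ℝ} (hq : 0 < q) (M : ℝ → ℝ≥0∞)
    (hM : AEMeasurable M (volume.restrict (Ioo 0 T))) :
    ∫⁻ t in Ioo 0 T, ∫⁻ s in Ioo 0 T,
      (if s < t then ENNReal.ofReal ((t - s) ^ (q - 1)) * M t else 0) ≤
    ENNReal.ofReal (T ^ q / q) * ∫⁻ t in Ioo 0 T, M t := by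
  rw [← lintegral_const_mul'' _ hM]
  refine setLIntegral_mono' measurableSet_Ioo fun t ht => ?_
  calc ∫⁻ s in Ioo 0 T, (if s < t then ENNReal.ofReal ((t - s) ^ (q - 1)) * M t else 0)
      = ∫⁻ s in Ioo 0 t, ENNReal.ofReal ((t - s) ^ (q - 1)) * M t := by
        rw [← lintegral_indicator measurableSet_Ioo, ← lintegral_indicator measurableSet_Ioo]
        congr 1
        ext s
        have := ht.2
        simp only [indicator, mem_Ioo]
        split_ifs <;> first | rfl | (exfalso; grind)
    _ = ENNReal.ofReal (t ^ q / q) * M t := by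
        rw [lintegral_mul_const _ (by fun_prop), lintegral_sub_rpow ht.1.le (by linarith)]
        simp
    _ ≤ _ := by
        gcongr
        · exact ht.1.le
        · exact ht.2.le

/-- The deterministic claim at the start of Theorem 4.7: for `g ∈ V^{β,p}` and a
bounded measurable `b`, the function `H(t) = ∫_0^t g(r) b(r) dr` is well defined,
satisfies `‖H(t)-H(s)‖ ≤ (2β+1)^{-1/2} ‖b‖_∞ N_β g(t) (t-s)^{β+1/2}`, and
`[H]_{W^{α,p}(0,T;E)}^p ≤ C ‖b‖_∞^p ∫_0^T (N_β g(t))^p dt`. -/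
theorem stmt13
    {E : Type*} [NormedAddCommGroup E] [InnerProductSpace ℝ E] [CompleteSpace E]
    (T p β α : ℝ) (hT : 0 < T) (hp : 1 ≤ p)
    (hβ : β ∈ Ioo (0:ℝ) (1 / 2)) (hα : 0 < α) (hα1 : α < 1) (hαβ : α < β + 1 / 2) :
    ∃ C > 0, ∀ (g : ℝ → E) (b : ℝ → ℝ) (B : ℝ) (N : ℝ → ℝ≥0∞) (H : ℝ → E),
      AEStronglyMeasurable g (volume.restrict (Ioo 0 T)) →
      Measurable b →
      (∀ r ∈ Ioo (0:ℝ) T, |b r| ≤ B) →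
      N = (fun t => (∫⁻ r in Ioo (0:ℝ) t,
          ENNReal.ofReal ((t - r) ^ (-(2 * β))) * (‖g r‖₊ : ℝ≥0∞) ^ 2) ^ ((1:ℝ)/2)) →
      H = (fun t => ∫ r in Ioo (0:ℝ) t, b r • g r) →
      (∀ t ∈ Ioc (0:ℝ) T, N t < ⊤) →
      (∫⁻ t in Ioo (0:ℝ) T, N t ^ p) < ⊤ →
      (∀ t ∈ Ioc (0:ℝ) T, IntegrableOn (fun r => b r • g r) (Ioo 0 t)) ∧
      (∀ s t : ℝ, 0 ≤ s → s ≤ t → t ≤ T →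
        ‖H t - H s‖ ≤ (2 * β + 1) ^ (-(1:ℝ)/2) * B * (N t).toReal * (t - s) ^ (β + 1/2)) ∧
      (∫⁻ t in Ioo (0:ℝ) T, ∫⁻ s in Ioo (0:ℝ) T,
          ENNReal.ofReal (‖H t - H s‖ ^ p / |t - s| ^ (α * p + 1))) ≤
        ENNReal.ofReal (C * B ^ p) * ∫⁻ t in Ioo (0:ℝ) T, N t ^ p := by
  obtain ⟨hβ0, hβ1⟩ := hβ
  have hp0 : 0 < p := by linarith
  set q : ℝ := (β + 1/2 - α) * p with hq
  have hq0 : 0 < q := mul_pos (by linarith) hp0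
  set c : ℝ := (2 * β + 1) ^ (-(1:ℝ)/2) with hc
  have hc0 : 0 < c := by positivity
  refine ⟨2 * (c ^ p * (T ^ q / q)), by positivity, ?_⟩
  intro g b B N H hg hb hB hN hH hfin hInt
  have hB0 : 0 ≤ B := (abs_nonneg _).trans (hB (T / 2) ⟨by linarith, by linarith⟩)
  have hCS : ∀ s t : ℝ, 0 ≤ s → s ≤ t → t ≤ T →
      ∫⁻ r in Ioo s t, ‖g r‖ₑ ≤ ENNReal.ofReal (c * (t - s) ^ (β + 1/2)) * N t := by
    intro s t hs hst htT
    rw [hN]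
    exact lintegral_enorm_le_weighted hβ0 hg hs hst htT
  have hbg : ∀ s t : ℝ, 0 ≤ s → s ≤ t → t ≤ T →
      ∫⁻ r in Ioo s t, ‖b r • g r‖ₑ ≤
        ENNReal.ofReal B * (ENNReal.ofReal (c * (t - s) ^ (β + 1/2)) * N t) := by
    intro s t hs hst htT
    refine le_trans ?_ (mul_le_mul_right (hCS s t hs hst htT) _)
    rw [← lintegral_const_mul' _ _ ENNReal.ofReal_ne_top]
    refine setLIntegral_mono' measurableSet_Ioo fun r hr => ?_
    rw [enorm_smul]
    gcongr
    rw [Real.enorm_eq_ofReal_abs]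
    exact ENNReal.ofReal_le_ofReal (hB r (Ioo_subset_Ioo hs htT hr))
  have hI : ∀ t ∈ Ioc (0:ℝ) T, IntegrableOn (fun r => b r • g r) (Ioo 0 t) := by
    intro t ht
    refine ⟨?_, ?_⟩
    · exact hb.aestronglyMeasurable.smul
        (hg.mono_measure (Measure.restrict_mono (Ioo_subset_Ioo_right ht.2) le_rfl))
    · refine (hbg 0 t le_rfl ht.1.le ht.2).trans_lt ?_
      exact ENNReal.mul_lt_top ENNReal.ofReal_lt_top
        (ENNReal.mul_lt_top ENNReal.ofReal_lt_top (hfin t ht))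
  have hHol : ∀ s t : ℝ, 0 ≤ s → s ≤ t → t ≤ T →
      ‖H t - H s‖ ≤ c * B * (N t).toReal * (t - s) ^ (β + 1/2) := by
    intro s t hs hst htT
    rcases hst.eq_or_lt with rfl | hlt
    · simp only [sub_self, norm_zero]
      rw [Real.zero_rpow (by linarith), mul_zero]
    have ht : t ∈ Ioc (0:ℝ) T := ⟨by linarith, htT⟩
    have hdiff : H t - H s = ∫ r in Ioo s t, b r • g r := by
      have hii := hI t ht
      rw [← intervalIntegrable_iff_integrableOn_Ioo_of_le ht.1.le] at hii
      have hii' : IntervalIntegrable (fun r => b r • g r) volume 0 s :=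
        hii.mono_set (by rw [uIcc_of_le hs, uIcc_of_le ht.1.le]; exact Icc_subset_Icc_right hst)
      rw [hH]
      simp only [← integral_Ioc_eq_integral_Ioo]
      rw [← intervalIntegral.integral_of_le ht.1.le, ← intervalIntegral.integral_of_le hs,
        ← intervalIntegral.integral_of_le hst]
      exact intervalIntegral.integral_interval_sub_left hii hii'
    have h1 : ENNReal.ofReal ‖H t - H s‖ ≤
        ENNReal.ofReal B * (ENNReal.ofReal (c * (t - s) ^ (β + 1/2)) * N t) := by
      rw [ofReal_norm, hdiff]
      exact (enorm_integral_le_lintegral_enorm _).trans (hbg s t hs hst htT)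
    have hts : 0 ≤ t - s := by linarith
    rw [← ENNReal.ofReal_toReal (hfin t ht).ne, ← ENNReal.ofReal_mul (by positivity),
      ← ENNReal.ofReal_mul hB0, ENNReal.ofReal_le_ofReal_iff (by positivity)] at h1
    calc _ ≤ _ := h1
      _ = _ := by ring
  refine ⟨hI, hHol, ?_⟩
  have hNm : AEMeasurable N (volume.restrict (Ioo 0 T)) := by
    rw [hN]; exact aemeasurable_weighted hg
  set M : ℝ → ℝ≥0∞ := fun t => ENNReal.ofReal ((c * B) ^ p) * N t ^ p with hMdef
  have hMm : AEMeasurable M (volume.restrict (Ioo 0 T)) := (hNm.pow_const p).const_mul _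
  set K : ℝ → ℝ → ℝ≥0∞ := fun t s =>
    if s < t then ENNReal.ofReal ((t - s) ^ (q - 1)) * M t else 0 with hK
  have hKm : AEMeasurable (Function.uncurry K)
      ((volume.restrict (Ioo 0 T)).prod (volume.restrict (Ioo 0 T))) := by
    have h1 : AEMeasurable (fun x : ℝ × ℝ => ENNReal.ofReal ((x.1 - x.2) ^ (q - 1)) * M x.1)
        ((volume.restrict (Ioo 0 T)).prod (volume.restrict (Ioo 0 T))) := by
      have h2 : Measurable (fun x : ℝ × ℝ => ENNReal.ofReal ((x.1 - x.2) ^ (q - 1))) := by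
        fun_prop
      exact h2.aemeasurable.mul hMm.comp_fst
    exact h1.indicator (measurableSet_lt measurable_snd measurable_fst)
  have hhalf : ∀ s t : ℝ, 0 < s → s < t → t < T →
      ENNReal.ofReal (‖H t - H s‖ ^ p / |t - s| ^ (α * p + 1)) ≤ K t s := by
    intro s t hs hst htT
    have hts : 0 < t - s := by linarith
    have hNt := (hfin t ⟨by linarith, htT.le⟩).ne
    simp only [hK, hMdef, if_pos hst]
    rw [abs_of_pos hts]
    nth_rewrite 1 [← ENNReal.ofReal_toReal hNt]
    rw [ENNReal.ofReal_rpow_of_nonneg ENNReal.toReal_nonneg hp0.le,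
      ← ENNReal.ofReal_mul (by positivity), ← ENNReal.ofReal_mul (by positivity)]
    refine ENNReal.ofReal_le_ofReal ?_
    rw [div_le_iff₀ (by positivity)]
    calc ‖H t - H s‖ ^ p ≤ (c * B * (N t).toReal * (t - s) ^ (β + 1/2)) ^ p := by
          gcongr
          exact hHol s t hs.le hst.le htT.le
      _ = (c * B) ^ p * (N t).toReal ^ p * (t - s) ^ ((β + 1/2) * p) := by
          rw [Real.mul_rpow (by positivity) (by positivity),
            Real.mul_rpow (by positivity) (by positivity), ← Real.rpow_mul hts.le]
      _ = (c * B) ^ p * (N t).toReal ^ p * ((t - s) ^ (q - 1) * (t - s) ^ (α * p + 1)) := by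
          rw [← Real.rpow_add hts, hq]
          congr 2
          ring
      _ = _ := by ring
  have hsym : ∀ t ∈ Ioo (0:ℝ) T, ∀ s ∈ Ioo (0:ℝ) T,
      ENNReal.ofReal (‖H t - H s‖ ^ p / |t - s| ^ (α * p + 1)) ≤ K t s + K s t := by
    intro t ht s hs
    rcases lt_trichotomy s t with h | rfl | h
    · exact (hhalf s t hs.1 h ht.2).trans le_self_add
    · simp [Real.zero_rpow hp0.ne']
    · rw [norm_sub_rev, abs_sub_comm]
      exact (hhalf t s ht.1 h hs.2).trans le_add_self
  have hKint := lintegral_kernel_le hq0 M hMm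
  have hMint : ∫⁻ t in Ioo 0 T, M t
      = ENNReal.ofReal ((c * B) ^ p) * ∫⁻ t in Ioo 0 T, N t ^ p :=
    lintegral_const_mul' _ _ ENNReal.ofReal_ne_top
  calc _ ≤ ∫⁻ t in Ioo 0 T, ∫⁻ s in Ioo 0 T, (K t s + K s t) :=
        setLIntegral_mono' measurableSet_Ioo fun t ht =>
          setLIntegral_mono' measurableSet_Ioo fun s hs => hsym t ht s hs
    _ = (∫⁻ t in Ioo 0 T, ∫⁻ s in Ioo 0 T, K t s)
        + ∫⁻ t in Ioo 0 T, ∫⁻ s in Ioo 0 T, K s t := by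
        have hKl : AEMeasurable (fun t => ∫⁻ s in Ioo 0 T, K t s) (volume.restrict (Ioo 0 T)) :=
          hKm.lintegral_prod_right'
        rw [← lintegral_add_left' hKl]
        refine lintegral_congr fun t => ?_
        refine lintegral_add_left ?_ _
        simp only [hK]
        exact Measurable.ite measurableSet_Iio (by fun_prop) measurable_const
    _ = 2 * ∫⁻ t in Ioo 0 T, ∫⁻ s in Ioo 0 T, K t s := by
        rw [two_mul, lintegral_lintegral_swap hKm]
    _ ≤ 2 * (ENNReal.ofReal (T ^ q / q) * ∫⁻ t in Ioo 0 T, M t) := by gcongr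
    _ = _ := by
        rw [hMint, ← mul_assoc, ← mul_assoc]
        congr 1
        rw [← ENNReal.ofReal_ofNat 2, ← ENNReal.ofReal_mul (by norm_num),
          ← ENNReal.ofReal_mul (by positivity), Real.mul_rpow hc0.le hB0]
        congr 1
        ring
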